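/- Let Ω be a finite probability space, let A : Ω → 𝒜 be a random variable on a finite nonempty index set 𝒜, let (X_a)_{a ∈ 𝒜} be a family of random variables X_a : Ω → 𝒳 on a common finite nonempty set 𝒳, and let Y : Ω → 𝒴 be a random variable with 𝒴 finite and nonempty. Define the random variable X_A : Ω → 𝒳 by X_A(ω) = X_{A(ω)}(ω). If there is a real number H such that H̃∞(X_a | Y) = H for every a ∈ 𝒜, then H̃∞(X_A | Y) ≥ H − log₂|𝒜|. -/

import Mathlib

open Finset Real

/-- Probability of an event `E` under the weight function `p` on a finite sample space. -/
noncomputable def pr {Ω : Type*} [Fintype Ω] (p : Ω → ℝ) (E : Set Ω) : ℝ :=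
  ∑ ω, E.indicator p ω

/-- `P[X = x]`. -/
noncomputable def prEq {Ω 𝒳 : Type*} [Fintype Ω] (p : Ω → ℝ) (X : Ω → 𝒳) (x : 𝒳) : ℝ :=
  pr p {ω | X ω = x}

/-- `P[X = x | Y = y]`, taken to be `0` when `P[Y = y] = 0`. -/
noncomputable def condProb {Ω 𝒳 𝒴 : Type*} [Fintype Ω]
    (p : Ω → ℝ) (X : Ω → 𝒳) (x : 𝒳) (Y : Ω → 𝒴) (y : 𝒴) : ℝ :=
  if prEq p Y y = 0 then 0 else pr p {ω | X ω = x ∧ Y ω = y} / prEq p Y y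

/-- Average min-entropy `H̃∞(X | Y)`. -/
noncomputable def avgMinEntropy {Ω 𝒳 𝒴 : Type*} [Fintype Ω]
    [Fintype 𝒳] [Nonempty 𝒳] [Fintype 𝒴]
    (p : Ω → ℝ) (X : Ω → 𝒳) (Y : Ω → 𝒴) : ℝ :=
  - Real.logb 2 (∑ y : 𝒴, prEq p Y y *
      (Finset.univ.sup' Finset.univ_nonempty fun x : 𝒳 => condProb p X x Y y))

/-- Min-entropy `H∞(X)`. -/
noncomputable def minEntropy {Ω 𝒳 : Type*} [Fintype Ω] [Fintype 𝒳] [Nonempty 𝒳]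
    (p : Ω → ℝ) (X : Ω → 𝒳) : ℝ :=
  - Real.logb 2 (Finset.univ.sup' Finset.univ_nonempty fun x : 𝒳 => prEq p X x)

/-!
Multiplying `P[X = x | Y = y]` by `P[Y = y]` gives
`2 ^ (-H̃∞(X | Y)) = ∑ y, max_x P[X = x, Y = y]`, the best probability of guessing `X` from `Y`.
The event `X_A = x` is contained in the union over `a` of the events `X_a = x`, so by the union
bound the guessing probability of `X_A` is at most the sum of those of the `X_a`, hence at most
`|𝒜| * 2 ^ (-H)`.
-/

section Probability

variable {Ω : Type*} [Fintype Ω] {p : Ω → ℝ}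

theorem pr_nonneg (hp : 0 ≤ p) (E : Set Ω) : 0 ≤ pr p E :=
  sum_nonneg fun _ _ => Set.indicator_nonneg (fun ω _ => hp ω) _

theorem pr_pos (hp : 0 ≤ p) {E : Set Ω} {ω : Ω} (hωE : ω ∈ E) (hω : 0 < p ω) : 0 < pr p E :=
  sum_pos' (fun _ _ => Set.indicator_nonneg (fun ω _ => hp ω) _)
    ⟨ω, mem_univ ω, by rwa [Set.indicator_of_mem hωE]⟩

theorem pr_mono (hp : 0 ≤ p) {E F : Set Ω} (hEF : E ⊆ F) : pr p E ≤ pr p F :=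
  sum_le_sum fun ω _ => Set.indicator_le_indicator_of_subset hEF hp ω

theorem pr_iUnion_le_sum {ι : Type*} [Fintype ι] (hp : 0 ≤ p) (E : ι → Set Ω) :
    pr p (⋃ i, E i) ≤ ∑ i, pr p (E i) := by
  have indicator_nonneg (i : ι) (ω : Ω) : 0 ≤ (E i).indicator p ω :=
    Set.indicator_nonneg (fun ω _ => hp ω) ω
  unfold pr
  rw [sum_comm]
  refine sum_le_sum fun ω _ => Set.indicator_apply_le' (fun hω => ?_)
    fun _ => sum_nonneg fun i _ => indicator_nonneg i ω
  obtain ⟨i, hi⟩ := Set.mem_iUnion.1 hω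
  calc p ω = (E i).indicator p ω := (Set.indicator_of_mem hi p).symm
    _ ≤ ∑ j, (E j).indicator p ω :=
      single_le_sum (fun j _ => indicator_nonneg j ω) (mem_univ i)

theorem prEq_mul_condProb {𝒳 𝒴 : Type*} (hp : 0 ≤ p) (X : Ω → 𝒳) (x : 𝒳) (Y : Ω → 𝒴) (y : 𝒴) :
    prEq p Y y * condProb p X x Y y = pr p {ω | X ω = x ∧ Y ω = y} := by
  unfold condProb
  split_ifs with hy
  · have joint_le : pr p {ω | X ω = x ∧ Y ω = y} ≤ prEq p Y y := pr_mono hp fun _ hω => hω.2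
    rw [mul_zero]
    exact le_antisymm (pr_nonneg hp _) (joint_le.trans_eq hy)
  · exact mul_div_cancel₀ _ hy

end Probability

section GuessingProbability

variable {Ω 𝒳 𝒴 : Type*} [Fintype Ω] [Fintype 𝒳] [Nonempty 𝒳] [Fintype 𝒴] {p : Ω → ℝ}

/-- The guessing probability of `X` given `Y`, that is, the largest probability with which a
function of `Y` equals `X`. It is written with joint rather than conditional probabilities, so that
values `y` of probability zero need no separate treatment. -/
noncomputable def guessProb (p : Ω → ℝ) (X : Ω → 𝒳) (Y : Ω → 𝒴) : ℝ :=
  ∑ y, univ.sup' univ_nonempty fun x => pr p {ω | X ω = x ∧ Y ω = y}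

theorem avgMinEntropy_eq_neg_logb_guessProb (hp : 0 ≤ p) (X : Ω → 𝒳) (Y : Ω → 𝒴) :
    avgMinEntropy p X Y = -logb 2 (guessProb p X Y) := by
  have prEq_nonneg (y : 𝒴) : 0 ≤ prEq p Y y := pr_nonneg hp _
  simp only [avgMinEntropy, guessProb, mul₀_sup' (prEq_nonneg _), prEq_mul_condProb hp]

theorem guessProb_pos (hp : 0 < p) (X : Ω → 𝒳) (Y : Ω → 𝒴) : 0 < guessProb p X Y := by
  obtain ⟨hp_nonneg, ω, hω⟩ := Pi.lt_def.1 hp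
  have le_max (x : 𝒳) (y : 𝒴) : pr p {ω | X ω = x ∧ Y ω = y} ≤
      univ.sup' univ_nonempty fun x => pr p {ω | X ω = x ∧ Y ω = y} :=
    le_sup' (fun x => pr p {ω | X ω = x ∧ Y ω = y}) (mem_univ x)
  have joint_pos : 0 < pr p {ω' | X ω' = X ω ∧ Y ω' = Y ω} := pr_pos hp_nonneg ⟨rfl, rfl⟩ hω
  exact sum_pos' (fun y _ => (pr_nonneg hp_nonneg _).trans (le_max (X ω) y))
    ⟨Y ω, mem_univ _, joint_pos.trans_le (le_max (X ω) (Y ω))⟩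

theorem le_avgMinEntropy_iff (hp : 0 < p) {X : Ω → 𝒳} {Y : Ω → 𝒴} {H : ℝ} :
    H ≤ avgMinEntropy p X Y ↔ guessProb p X Y ≤ 2 ^ (-H) := by
  rw [avgMinEntropy_eq_neg_logb_guessProb hp.le, le_neg,
    logb_le_iff_le_rpow one_lt_two (guessProb_pos hp X Y)]

theorem guessProb_select_le_sum {𝒜 : Type*} [Fintype 𝒜] (hp : 0 ≤ p)
    (A : Ω → 𝒜) (X : 𝒜 → Ω → 𝒳) (Y : Ω → 𝒴) :
    guessProb p (fun ω => X (A ω) ω) Y ≤ ∑ a, guessProb p (X a) Y := by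
  unfold guessProb
  rw [sum_comm]
  refine sum_le_sum fun y _ => sup'_le _ _ fun x _ => ?_
  calc pr p {ω | X (A ω) ω = x ∧ Y ω = y}
      ≤ pr p (⋃ a, {ω | X a ω = x ∧ Y ω = y}) :=
        pr_mono hp fun ω hω => Set.mem_iUnion.2 ⟨A ω, hω⟩
    _ ≤ ∑ a, pr p {ω | X a ω = x ∧ Y ω = y} := pr_iUnion_le_sum hp _
    _ ≤ ∑ a, univ.sup' univ_nonempty fun x => pr p {ω | X a ω = x ∧ Y ω = y} :=
        sum_le_sum fun a _ => le_sup' (fun x => pr p {ω | X a ω = x ∧ Y ω = y}) (mem_univ x)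

end GuessingProbability

theorem stmt_3_general {Ω 𝒜 𝒳 𝒴 : Type*} [Fintype Ω] [Fintype 𝒜] [Fintype 𝒳] [Nonempty 𝒳]
    [Fintype 𝒴] {p : Ω → ℝ} (hp : 0 < p) (A : Ω → 𝒜) {X : 𝒜 → Ω → 𝒳} {Y : Ω → 𝒴} {H : ℝ}
    (hH : ∀ a, H ≤ avgMinEntropy p (X a) Y) :
    H - logb 2 (Fintype.card 𝒜) ≤ avgMinEntropy p (fun ω => X (A ω) ω) Y := by
  have : Nonempty 𝒜 := (Pi.lt_def.1 hp).2.nonempty.map A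
  have card_pos : (0 : ℝ) < Fintype.card 𝒜 := mod_cast Fintype.card_pos
  rw [le_avgMinEntropy_iff hp]
  calc guessProb p (fun ω => X (A ω) ω) Y
      ≤ ∑ a, guessProb p (X a) Y := guessProb_select_le_sum hp.le A X Y
    _ ≤ ∑ _a : 𝒜, (2 : ℝ) ^ (-H) := sum_le_sum fun a _ => (le_avgMinEntropy_iff hp).1 (hH a)
    _ = Fintype.card 𝒜 * 2 ^ (-H) := by rw [sum_const, card_univ, nsmul_eq_mul]
    _ = 2 ^ (-(H - logb 2 (Fintype.card 𝒜))) := by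
      rw [neg_sub, sub_eq_add_neg, rpow_add two_pos,
        rpow_logb two_pos (OfNat.ofNat_ne_one 2) card_pos]

theorem stmt_3 {Ω 𝒜 𝒳 𝒴 : Type*} [Fintype Ω]
    [Fintype 𝒜] [Nonempty 𝒜] [Fintype 𝒳] [Nonempty 𝒳] [Fintype 𝒴] [Nonempty 𝒴]
    (p : Ω → ℝ) (hp : ∀ ω, 0 ≤ p ω) (hsum : ∑ ω, p ω = 1)
    (A : Ω → 𝒜) (X : 𝒜 → Ω → 𝒳) (Y : Ω → 𝒴) (H : ℝ)
    (hH : ∀ a : 𝒜, avgMinEntropy p (X a) Y = H) :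
    avgMinEntropy p (fun ω => X (A ω) ω) Y ≥ H - Real.logb 2 (Fintype.card 𝒜) := by
  have hp_ne_zero : p ≠ 0 := fun h => by simp [h] at hsum
  exact stmt_3_general (lt_of_le_of_ne hp hp_ne_zero.symm) A fun a => (hH a).ge
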